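/- Let p and q be coprime integers with q > 0 and p ≠ −q, and let σ ∈ PGL₂(ℚ) be given by σ(z) = (qz + q)/(pz − q) (an involution). Then for every algebraic number α with α ∉ {0, −1}, h(α) + h(σ(α)) ≥ log max(|p − q|/2, q). Moreover, if p − q is even, then equality holds for α = 1. -/

import Mathlib

/- For a nonzero `f ∈ ℤ[X]`, the Mahler measure `M(f) = |a_n| ∏ max(|α_i|,1)`. -/
open Polynomial

noncomputable def mahlerMeasure (f : ℤ[X]) : ℝ :=
  |(f.leadingCoeff : ℝ)| *
    (((f.map (Int.castRingHom ℂ)).roots).map (fun z => max ‖z‖ 1)).prod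

/-- The primitive minimal polynomial over `ℤ` of an algebraic number. -/
noncomputable def intMinpoly (α : ℂ) : ℤ[X] :=
  (IsLocalization.integerNormalization (nonZeroDivisors ℤ) (minpoly ℚ α)).primPart

/-- The absolute logarithmic Weil height `h(α) = (1/n) log M(f)`. -/
noncomputable def height (α : ℂ) : ℝ :=
  Real.log (mahlerMeasure (intMinpoly α)) / (minpoly ℚ α).natDegree

/-!
Let `f` be the primitive minimal polynomial of `α`, of degree `n` with roots `αᵢ`, and let `T` be
the numerator of `f ∘ σ⁻¹`. It is an integer multiple `k g` of the primitive minimal polynomial `g`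
of `σ(α)`, and it has Mahler measure `|lc f| ∏ max(|pαᵢ - q|, |qαᵢ + q|)`. With
`B = max(|p - q|/2, q)`, the inequality
`B |z| |z + 1| ≤ max(|z|, 1) max(|qz + q|, |pz - q|)`, multiplied over all `z = αᵢ`, gives
`Bⁿ |f(0) f(-1)| ≤ M(f) M(T) = |k| M(f) M(g)`.

The values of `T` at `σ(0) = -1` and `σ(-1) = 0` are `(p + q)ⁿ f(0)` and `qⁿ f(-1)`; since `p + q`
and `q` are coprime, `k` divides the nonzero integer `f(0) f(-1)`. Hence `Bⁿ ≤ M(f) M(g)`.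
-/

section MobiusInequality

variable {a b c d p q x : ℝ} {z : ℂ}

lemma abs_add_one_add_abs_sub_one (x : ℝ) : |x + 1| + |x - 1| = 2 * max |x| 1 := by
  rcases le_total |x| 1 with h | h
  · obtain ⟨hl, hr⟩ := abs_le.1 h
    rw [max_eq_right h, abs_of_nonneg (by linarith), abs_of_nonpos (by linarith)]
    ring
  · rw [max_eq_left h]
    rcases le_abs'.1 h with hx | hx
    · rw [abs_of_nonpos (by linarith), abs_of_nonpos (by linarith), abs_of_nonpos (by linarith)]
      ring
    · rw [abs_of_nonneg (by linarith), abs_of_nonneg (by linarith), abs_of_nonneg (by linarith)]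
      ring

lemma sq_norm_ofReal_mul_add_ofReal (a b : ℝ) (z : ℂ) :
    ‖a * z + b‖ ^ 2 = a ^ 2 * ‖z‖ ^ 2 + b ^ 2 + 2 * a * b * z.re := by
  simp only [← Complex.normSq_eq_norm_sq, Complex.normSq_apply, Complex.add_re, Complex.add_im,
    Complex.re_ofReal_mul, Complex.im_ofReal_mul, Complex.ofReal_re, Complex.ofReal_im]
  ring

/- On the circle `‖z‖ = r` the difference of the squares of the two sides is an affine function of
`z.re`, so its minimum is attained at a real point. -/
lemma mul_norm_le_mul_norm_of_forall_abs_eq_norm {s t : ℝ} (hs : 0 ≤ s) (ht : 0 ≤ t)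
    (h : ∀ x : ℝ, |x| = ‖z‖ → s * |a * x + b| ≤ t * |c * x + d|) :
    s * ‖a * z + b‖ ≤ t * ‖c * z + d‖ := by
  have hreal : ∀ x : ℝ, |x| = ‖z‖ → s ^ 2 * (a ^ 2 * ‖z‖ ^ 2 + b ^ 2 + 2 * a * b * x) ≤
      t ^ 2 * (c ^ 2 * ‖z‖ ^ 2 + d ^ 2 + 2 * c * d * x) := by
    intro x hx
    have hsq := pow_le_pow_left₀ (by positivity) (h x hx) 2
    rw [mul_pow, mul_pow, sq_abs, sq_abs] at hsq
    rw [← hx, sq_abs]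
    linarith
  have hpos := hreal ‖z‖ (abs_norm z)
  have hneg := hreal (-‖z‖) (by rw [abs_neg, abs_norm])
  obtain ⟨hl, hr⟩ := abs_le.1 (Complex.abs_re_le_norm z)
  refine le_of_sq_le_sq ?_ (by positivity)
  rw [mul_pow, mul_pow, sq_norm_ofReal_mul_add_ofReal, sq_norm_ofReal_mul_add_ofReal]
  rcases le_total (s ^ 2 * (a * b)) (t ^ 2 * (c * d)) with hslope | hslope <;> nlinarith

lemma half_abs_sub_mul_abs_le (hq : |q| * max |x| 1 ≤ |p - q| / 2 * |x|) :
    |p - q| / 2 * |x| * |x + 1| ≤ max |x| 1 * |p * x - q| := by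
  have hsplit : |p - q| * |x| ≤ |p * x - q| + |q| * |x - 1| := by
    rw [← abs_mul, ← abs_mul]
    calc |(p - q) * x| = |(p * x - q) - q * (x - 1)| := by ring_nf
      _ ≤ |p * x - q| + |q * (x - 1)| := abs_sub _ _
  calc |p - q| / 2 * |x| * |x + 1|
      = max |x| 1 * (|p - q| * |x|) - |p - q| / 2 * |x| * |x - 1| := by
        linear_combination |p - q| / 2 * |x| * abs_add_one_add_abs_sub_one x
    _ ≤ max |x| 1 * (|p * x - q| + |q| * |x - 1|) - |q| * max |x| 1 * |x - 1| := by gcongr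
    _ = max |x| 1 * |p * x - q| := by ring

lemma half_abs_sub_mul_norm_le (hq : |q| * max ‖z‖ 1 ≤ |p - q| / 2 * ‖z‖) :
    |p - q| / 2 * ‖z‖ * ‖z + 1‖ ≤ max ‖z‖ 1 * ‖p * z - q‖ := by
  have hcircle := mul_norm_le_mul_norm_of_forall_abs_eq_norm (z := z) (a := 1) (b := 1) (c := p)
    (d := -q) (s := |p - q| / 2 * ‖z‖) (t := max ‖z‖ 1) (by positivity) (by positivity)
    fun x hx ↦ by
      rw [← hx] at hq ⊢
      simpa only [one_mul, ← sub_eq_add_neg] using half_abs_sub_mul_abs_le hq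
  simpa only [Complex.ofReal_one, one_mul, Complex.ofReal_neg, ← sub_eq_add_neg] using hcircle

lemma max_half_abs_sub_mul_norm_mul_norm_add_one_le (p q : ℝ) (z : ℂ) :
    max (|p - q| / 2) |q| * (‖z‖ * ‖z + 1‖) ≤ max ‖z‖ 1 * max ‖q * z + q‖ ‖p * z - q‖ := by
  have hqz : ‖(q * z + q : ℂ)‖ = |q| * ‖z + 1‖ := by
    rw [← mul_add_one, norm_mul, Complex.norm_real, Real.norm_eq_abs]
  rcases le_total (|p - q| / 2 * ‖z‖) (|q| * max ‖z‖ 1) with h | h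
  · calc max (|p - q| / 2) |q| * (‖z‖ * ‖z + 1‖)
        = max (|p - q| / 2 * ‖z‖) (|q| * ‖z‖) * ‖z + 1‖ := by
          rw [← max_mul_of_nonneg _ _ (norm_nonneg z), mul_assoc]
      _ ≤ |q| * max ‖z‖ 1 * ‖z + 1‖ := by
          gcongr
          exact max_le h (by gcongr; exact le_max_left _ _)
      _ = max ‖z‖ 1 * ‖q * z + q‖ := by rw [hqz]; ring
      _ ≤ max ‖z‖ 1 * max ‖q * z + q‖ ‖p * z - q‖ := by gcongr; exact le_max_left _ _
  · have hmax : max (|p - q| / 2) |q| * ‖z‖ = |p - q| / 2 * ‖z‖ := by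
      rw [max_mul_of_nonneg _ _ (norm_nonneg z), max_eq_left (le_trans ?_ h)]
      gcongr
      exact le_max_left _ _
    calc max (|p - q| / 2) |q| * (‖z‖ * ‖z + 1‖)
        = |p - q| / 2 * ‖z‖ * ‖z + 1‖ := by rw [← mul_assoc, hmax]
      _ ≤ max ‖z‖ 1 * ‖p * z - q‖ := half_abs_sub_mul_norm_le h
      _ ≤ max ‖z‖ 1 * max ‖q * z + q‖ ‖p * z - q‖ := by gcongr; exact le_max_right _ _

end MobiusInequality

section HomogenizedEvaluation

variable {R A : Type*} [CommSemiring R] [CommSemiring A] [Algebra R A]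

lemma aeval_homogenize_mul_left (s x : A) {f : R[X]} {n : ℕ} (hn : f.natDegree ≤ n) :
    MvPolynomial.aeval ![s * x, s] (f.homogenize n) = s ^ n * aeval x f := by
  refine induction_with_natDegree_le
    (fun f ↦ MvPolynomial.aeval ![s * x, s] (f.homogenize n) = s ^ n * aeval x f)
    n ?_ (fun m r _ hm ↦ ?_) (fun f g _ _ hf hg ↦ ?_) f hn
  · simp
  · obtain ⟨k, rfl⟩ := Nat.exists_eq_add_of_le hm
    simp only [homogenize_C_mul, homogenize_X_pow hm, add_tsub_cancel_left, map_mul, map_pow,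
      MvPolynomial.algHom_C, MvPolynomial.aeval_X, Matrix.cons_val_zero, Matrix.cons_val_one,
      aeval_C, aeval_X]
    ring
  · rw [homogenize_add, map_add, map_add, hf, hg, mul_add]

end HomogenizedEvaluation

/-- The homogeneous form of `f` evaluated at `(dX - b, a - cX)`, that is, the numerator
`(a - cX) ^ n * f ((dX - b) / (a - cX))` of `f ∘ σ⁻¹` for `σ(z) = (az + b) / (cz + d)` and
`n = natDegree f`. Its roots are the finite images under `σ` of the roots of `f`. -/
noncomputable def mobiusTransform {R : Type*} [CommRing R] (a b c d : R) (f : R[X]) : R[X] :=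
  MvPolynomial.aeval ![C d * X - C b, C a - C c * X] (f.homogenize f.natDegree)

namespace mobiusTransform

variable {R A : Type*} [CommRing R] [CommRing A] [Algebra R A] {a b c d : R} {f : R[X]}

lemma natDegree_le (a b c d : R) (f : R[X]) :
    (mobiusTransform a b c d f).natDegree ≤ f.natDegree := by
  have hlinear : ∀ i, (![C d * X - C b, C a - C c * X] i : R[X]).natDegree ≤ 1 := by
    rw [Fin.forall_fin_two]
    constructor <;> simp only [Matrix.cons_val_zero, Matrix.cons_val_one] <;> compute_degree
  simpa only [mobiusTransform, mul_one] using
    MvPolynomial.aeval_natDegree_le _ (isHomogeneous_homogenize f).totalDegree_le _ hlinear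

lemma aeval_eq_pow_mul_aeval {u x : A} (h : algebraMap R A d * u - algebraMap R A b =
      (algebraMap R A a - algebraMap R A c * u) * x) :
    aeval u (mobiusTransform a b c d f) =
      (algebraMap R A a - algebraMap R A c * u) ^ f.natDegree * aeval x f := by
  rw [← aeval_homogenize_mul_left _ _ le_rfl, ← h, mobiusTransform, MvPolynomial.comp_aeval_apply]
  congr 2
  funext i
  fin_cases i <;> simp

lemma dvd_eval_mul_eval {k u v x y : R} (hk : C k ∣ mobiusTransform a b c d f)
    (hu : d * u - b = (a - c * u) * x) (hv : d * v - b = (a - c * v) * y)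
    (huv : IsCoprime (a - c * u) (a - c * v)) : k ∣ f.eval x * f.eval y := by
  have hdvd {w z : R} (hw : d * w - b = (a - c * w) * z) :
      k ∣ (a - c * w) ^ f.natDegree * f.eval z := by
    have heval : (mobiusTransform a b c d f).eval w = (a - c * w) ^ f.natDegree * f.eval z :=
      aeval_eq_pow_mul_aeval (A := R) hw
    rw [← heval]
    simpa only [eval_C] using eval_dvd (x := w) hk
  obtain ⟨s, t, hst⟩ : IsCoprime ((a - c * u) ^ f.natDegree) ((a - c * v) ^ f.natDegree) :=
    huv.pow
  have hcomb : f.eval x * f.eval y = s * f.eval y * ((a - c * u) ^ f.natDegree * f.eval x) +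
      t * f.eval x * ((a - c * v) ^ f.natDegree * f.eval y) := by
    linear_combination -(f.eval x * f.eval y) * hst
  rw [hcomb]
  exact dvd_add ((hdvd hu).mul_left _) ((hdvd hv).mul_left _)

lemma map_of_injective {S : Type*} [CommRing S] (φ : R →+* S) (hφ : Function.Injective φ) :
    (mobiusTransform a b c d f).map φ =
      mobiusTransform (φ a) (φ b) (φ c) (φ d) (f.map φ) := by
  rw [mobiusTransform, mobiusTransform, natDegree_map_eq_of_injective hφ, homogenize_map,
    MvPolynomial.aeval_def, MvPolynomial.aeval_def, MvPolynomial.eval₂_map, ← coe_mapRingHom,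
    MvPolynomial.eval₂_comp_left]
  congr 1
  · ext
    simp
  · funext i
    fin_cases i <;> simp

end mobiusTransform

section SplitPolynomial

variable {R : Type*} [CommRing R]

lemma homogenize_multiset_prod_X_sub_C [Nontrivial R] (s : Multiset R) :
    (s.map fun z ↦ X - C z).prod.homogenize s.card =
      (s.map fun z ↦ MvPolynomial.X 0 - MvPolynomial.C z * MvPolynomial.X 1).prod := by
  induction s using Multiset.induction with
  | empty => simp
  | cons z s ih =>
    rw [Multiset.map_cons, Multiset.prod_cons, Multiset.map_cons, Multiset.prod_cons,
      Multiset.card_cons, add_comm, homogenize_mul _ _ (natDegree_X_sub_C_le z)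
      (natDegree_multiset_prod_X_sub_C_eq_card s).le, ih, homogenize_sub]
    simp

lemma mobiusTransform_eq_prod_roots [IsDomain R] (a b c d : R) {f : R[X]} (hf : f.Splits) :
    mobiusTransform a b c d f = C f.leadingCoeff *
      (f.roots.map fun z ↦ C (c * z + d) * X - C (a * z + b)).prod := by
  have hhom : f.homogenize f.natDegree = MvPolynomial.C f.leadingCoeff *
      (f.roots.map fun z ↦ MvPolynomial.X 0 - MvPolynomial.C z * MvPolynomial.X 1).prod := by
    rw [← homogenize_multiset_prod_X_sub_C, ← homogenize_C_mul, ← hf.eq_prod_roots,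
      hf.natDegree_eq_card_roots]
  rw [mobiusTransform, hhom, map_mul, map_multiset_prod, Multiset.map_map, MvPolynomial.aeval_C,
    algebraMap_eq]
  congr 3
  funext z
  simp only [Function.comp_apply, map_sub, map_mul, map_add, MvPolynomial.aeval_X,
    MvPolynomial.algHom_C, algebraMap_eq, Matrix.cons_val_zero, Matrix.cons_val_one]
  ring

end SplitPolynomial

section MahlerMeasure

lemma mahlerMeasure_eq_mahlerMeasure_map (f : ℤ[X]) :
    mahlerMeasure f = (f.map (Int.castRingHom ℂ)).mahlerMeasure := by
  simp [Polynomial.mahlerMeasure_eq_leadingCoeff_mul_prod_roots, _root_.mahlerMeasure,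
    leadingCoeff_map_of_injective (RingHom.injective_int (Int.castRingHom ℂ)), max_comm]

lemma mahlerMeasure_C_mul (k : ℤ) (f : ℤ[X]) :
    mahlerMeasure (C k * f) = |(k : ℝ)| * mahlerMeasure f := by
  rw [mahlerMeasure_eq_mahlerMeasure_map, mahlerMeasure_eq_mahlerMeasure_map, Polynomial.map_mul,
    map_C, Polynomial.mahlerMeasure_mul, Polynomial.mahlerMeasure_const, eq_intCast,
    Complex.norm_intCast]

lemma one_le_mahlerMeasure {f : ℤ[X]} (hf : f ≠ 0) : 1 ≤ mahlerMeasure f := by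
  rw [mahlerMeasure_eq_mahlerMeasure_map]
  exact Polynomial.one_le_mahlerMeasure_of_ne_zero hf

lemma mahlerMeasure_C_mul_X_sub_C (a b : ℂ) :
    (C a * X - C b).mahlerMeasure = max ‖a‖ ‖b‖ := by
  rcases eq_or_ne a 0 with rfl | ha
  · rw [C_0, zero_mul, zero_sub, ← C_neg, Polynomial.mahlerMeasure_const, norm_neg, norm_zero,
      max_eq_right (norm_nonneg b)]
  · rw [sub_eq_add_neg, ← C_neg, Polynomial.mahlerMeasure_C_mul_X_add_C ha, norm_neg]

lemma mahlerMeasure_mobiusTransform (a b c d : ℂ) (f : ℂ[X]) :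
    (mobiusTransform a b c d f).mahlerMeasure = ‖f.leadingCoeff‖ *
      (f.roots.map fun z ↦ max ‖c * z + d‖ ‖a * z + b‖).prod := by
  rw [mobiusTransform_eq_prod_roots a b c d (IsAlgClosed.splits f), Polynomial.mahlerMeasure_mul,
    Polynomial.mahlerMeasure_const, Polynomial.prod_mahlerMeasure_eq_mahlerMeasure_prod,
    Multiset.map_map]
  simp only [Function.comp_def, mahlerMeasure_C_mul_X_sub_C]

lemma norm_eval_eq_leadingCoeff_mul_prod_roots (f : ℂ[X]) (x : ℂ) :
    ‖f.eval x‖ = ‖f.leadingCoeff‖ * (f.roots.map fun z ↦ ‖x - z‖).prod := by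
  rw [(IsAlgClosed.splits f).eval_eq_prod_roots, norm_mul]
  congr 1
  exact (map_multiset_prod (normHom : ℂ →*₀ ℝ) _).trans (by rw [Multiset.map_map]; rfl)

lemma pow_natDegree_mul_norm_eval_le_mahlerMeasure_mul {a b c d x y : ℂ} {B : ℝ} (hB : 0 ≤ B)
    (h : ∀ z, B * (‖x - z‖ * ‖y - z‖) ≤ max ‖z‖ 1 * max ‖a * z + b‖ ‖c * z + d‖) (f : ℂ[X]) :
    B ^ f.natDegree * (‖f.eval x‖ * ‖f.eval y‖) ≤
      f.mahlerMeasure * (mobiusTransform a b c d f).mahlerMeasure := by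
  have hroots : B ^ f.natDegree * ((f.roots.map fun z ↦ ‖x - z‖).prod *
      (f.roots.map fun z ↦ ‖y - z‖).prod) ≤ (f.roots.map fun z ↦ max 1 ‖z‖).prod *
      (f.roots.map fun z ↦ max ‖c * z + d‖ ‖a * z + b‖).prod := by
    rw [(IsAlgClosed.splits f).natDegree_eq_card_roots, ← Multiset.prod_map_mul,
      ← Multiset.prod_map_mul, ← Multiset.prod_replicate, ← Multiset.map_const',
      ← Multiset.prod_map_mul]
    refine Multiset.prod_map_le_prod_map₀ _ _ (fun z _ ↦ by positivity) fun z _ ↦ ?_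
    rw [max_comm 1, max_comm ‖c * z + d‖]
    exact h z
  rw [norm_eval_eq_leadingCoeff_mul_prod_roots, norm_eval_eq_leadingCoeff_mul_prod_roots,
    mahlerMeasure_mobiusTransform, Polynomial.mahlerMeasure_eq_leadingCoeff_mul_prod_roots]
  nlinarith [mul_le_mul_of_nonneg_left hroots (sq_nonneg ‖f.leadingCoeff‖)]

lemma pow_natDegree_mul_abs_eval_le_mahlerMeasure_mul {a b c d x y : ℤ} {B : ℝ} (hB : 0 ≤ B)
    (h : ∀ z : ℂ, B * (‖x - z‖ * ‖y - z‖) ≤ max ‖z‖ 1 * max ‖a * z + b‖ ‖c * z + d‖) (f : ℤ[X]) :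
    B ^ f.natDegree * |((f.eval x * f.eval y : ℤ) : ℝ)| ≤
      mahlerMeasure f * mahlerMeasure (mobiusTransform a b c d f) := by
  have hmap := pow_natDegree_mul_norm_eval_le_mahlerMeasure_mul hB h (f.map (Int.castRingHom ℂ))
  have hinj := RingHom.injective_int (Int.castRingHom ℂ)
  rw [natDegree_map_eq_of_injective hinj] at hmap
  simpa [mahlerMeasure_eq_mahlerMeasure_map, mobiusTransform.map_of_injective _ hinj,
    eval_intCast_map, abs_mul] using hmap

end MahlerMeasure

namespace intMinpoly

variable {α : ℂ}

lemma isPrimitive (α : ℂ) : (intMinpoly α).IsPrimitive :=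
  isPrimitive_primPart _

lemma associated_map_minpoly (hα : IsAlgebraic ℚ α) :
    Associated ((intMinpoly α).map (algebraMap ℤ ℚ)) (minpoly ℚ α) := by
  set g := IsLocalization.integerNormalization (nonZeroDivisors ℤ) (minpoly ℚ α) with hg
  have hg0 : g ≠ 0 := by
    rw [hg, Ne, IsFractionRing.integerNormalization_eq_zero_iff]
    exact minpoly.ne_zero hα.isIntegral
  have hunit {k : ℤ} (hk : k ≠ 0) : IsUnit (C (k : ℚ)) :=
    isUnit_C.2 (Int.cast_ne_zero.2 hk).isUnit
  obtain ⟨k, hk, hkg⟩ := IsLocalization.integerNormalization_spec (nonZeroDivisors ℤ) (minpoly ℚ α)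
  have hscale : C (g.content : ℚ) * (intMinpoly α).map (algebraMap ℤ ℚ) =
      C (k : ℚ) * minpoly ℚ α := by
    rw [← Int.cast_smul_eq_zsmul ℚ, smul_eq_C_mul, ← hg, eq_C_content_mul_primPart g,
      Polynomial.map_mul, map_C] at hkg
    exact hkg
  have hcontent := hunit (content_eq_zero_iff.not.2 hg0)
  refine (associated_unit_mul_left _ _ hcontent).symm.trans ?_
  rw [hscale]
  exact associated_unit_mul_left _ _ (hunit (nonZeroDivisors.ne_zero hk))

lemma natDegree_eq (hα : IsAlgebraic ℚ α) :
    (intMinpoly α).natDegree = (minpoly ℚ α).natDegree := by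
  rw [← natDegree_map_eq_of_injective (algebraMap ℤ ℚ).injective_int,
    natDegree_eq_of_degree_eq (degree_eq_degree_of_associated (associated_map_minpoly hα))]

lemma aeval_eq_zero (hα : IsAlgebraic ℚ α) : aeval α (intMinpoly α) = 0 := by
  rw [← aeval_map_algebraMap ℚ, ← minpoly.dvd_iff]
  exact (associated_map_minpoly hα).symm.dvd

lemma eval_ne_zero (hα : IsAlgebraic ℚ α) {x : ℤ} (hx : α ≠ x) : (intMinpoly α).eval x ≠ 0 := by
  intro heval
  have hroot : ((intMinpoly α).map (algebraMap ℤ ℚ)).IsRoot (x : ℚ) := by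
    rw [IsRoot, algebraMap_int_eq, eval_intCast_map, Int.cast_id, heval, map_zero]
  have hαx := minpoly.root hα.isIntegral (hroot.dvd (associated_map_minpoly hα).dvd)
  exact hx (by simpa using hαx.symm)

lemma dvd_of_aeval_eq_zero (hα : IsAlgebraic ℚ α) {f : ℤ[X]} (hf : aeval α f = 0) :
    intMinpoly α ∣ f := by
  refine (isPrimitive α).dvd_of_fraction_map_dvd_fraction_map (K := ℚ) ?_
  rw [(associated_map_minpoly hα).dvd_iff_dvd_left, minpoly.dvd_iff, aeval_map_algebraMap, hf]

lemma exists_eq_C_mul (hα : IsAlgebraic ℚ α) {f : ℤ[X]} (hf : aeval α f = 0)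
    (hdeg : f.natDegree ≤ (minpoly ℚ α).natDegree) : ∃ k, f = C k * intMinpoly α := by
  obtain ⟨g, rfl⟩ := dvd_of_aeval_eq_zero hα hf
  rcases eq_or_ne g 0 with rfl | hg
  · exact ⟨0, by simp⟩
  rw [natDegree_mul (isPrimitive α).ne_zero hg, natDegree_eq hα] at hdeg
  refine ⟨g.coeff 0, ?_⟩
  rw [← eq_C_of_natDegree_eq_zero (by lia : g.natDegree = 0), mul_comm]

lemma mahlerMeasure_eq_of_isPrimitive (hα : IsAlgebraic ℚ α) {f : ℤ[X]} (hprim : f.IsPrimitive)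
    (hf : aeval α f = 0) (hdeg : f.natDegree ≤ (minpoly ℚ α).natDegree) :
    mahlerMeasure (intMinpoly α) = mahlerMeasure f := by
  obtain ⟨k, rfl⟩ := exists_eq_C_mul hα hf hdeg
  have hk : |k| = 1 := Int.isUnit_iff_abs_eq.1 (hprim k (dvd_mul_right _ _))
  rw [mahlerMeasure_C_mul, ← Int.cast_abs, hk, Int.cast_one, one_mul]

end intMinpoly

section RationalHeight

lemma isPrimitive_C_mul_X_sub_C {R : Type*} [CommRing R] {a b : R} (hab : IsCoprime a b) :
    (C b * X - C a).IsPrimitive := by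
  intro r hr
  rw [C_dvd_iff_dvd_coeff] at hr
  refine hab.isUnit_of_dvd' ?_ ?_
  · simpa using hr 0
  · simpa using hr 1

variable {a b : ℤ}

lemma height_intCast_div_intCast_of_ne_zero (hab : IsCoprime a b) (hb : b ≠ 0) :
    height (a / b) = Real.log (max |(a : ℝ)| |(b : ℝ)|) := by
  have hcast : (a / b : ℂ) = algebraMap ℚ ℂ (a / b) := by simp
  have hdeg : (minpoly ℚ (a / b : ℂ)).natDegree = 1 := by
    rw [hcast, minpoly.eq_X_sub_C, natDegree_X_sub_C]
  have halg : IsAlgebraic ℚ (a / b : ℂ) := by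
    rw [hcast]
    exact isAlgebraic_algebraMap _
  have hroot : aeval (a / b : ℂ) (C b * X - C a) = 0 := by
    simp [mul_div_cancel₀, hb]
  have hmeasure : mahlerMeasure (intMinpoly (a / b)) = max |(a : ℝ)| |(b : ℝ)| := by
    rw [intMinpoly.mahlerMeasure_eq_of_isPrimitive halg (isPrimitive_C_mul_X_sub_C hab) hroot
      (by rw [hdeg]; compute_degree), mahlerMeasure_eq_mahlerMeasure_map, max_comm]
    simpa using mahlerMeasure_C_mul_X_sub_C (b : ℂ) (a : ℂ)
  rw [height, hdeg, hmeasure, Nat.cast_one, div_one]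

lemma height_zero : height 0 = 0 := by
  have hzero := height_intCast_div_intCast_of_ne_zero (isCoprime_one_right (x := 0)) one_ne_zero
  simpa using hzero

/- For `b = 0` the junk value `a / 0 = 0` gives the correct height `h(∞) = 0`. -/
lemma height_intCast_div_intCast (hab : IsCoprime a b) :
    height (a / b) = Real.log (max |(a : ℝ)| |(b : ℝ)|) := by
  rcases eq_or_ne b 0 with rfl | hb
  · have ha : |(a : ℝ)| = 1 := by
      exact_mod_cast Int.isUnit_iff_abs_eq.1 (isCoprime_zero_right.1 hab)
    simp [ha, height_zero]
  · exact height_intCast_div_intCast_of_ne_zero hab hb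

lemma height_one : height 1 = 0 := by
  simpa using height_intCast_div_intCast (isCoprime_one_left (x := 1))

end RationalHeight

section MobiusAdjoin

variable {K L : Type*} [Field K] [Field L] [Algebra K L] {a b c d : K} {α : L}

open scoped IntermediateField

lemma mobius_mem_intermediateField (F : IntermediateField K L) (hα : α ∈ F) :
    (algebraMap K L a * α + algebraMap K L b) / (algebraMap K L c * α + algebraMap K L d) ∈ F :=
  F.div_mem (F.add_mem (F.mul_mem (F.algebraMap_mem a) hα) (F.algebraMap_mem b))
    (F.add_mem (F.mul_mem (F.algebraMap_mem c) hα) (F.algebraMap_mem d))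

lemma isAlgebraic_mobius (hα : IsAlgebraic K α) :
    IsAlgebraic K ((algebraMap K L a * α + algebraMap K L b) /
      (algebraMap K L c * α + algebraMap K L d)) := by
  rw [div_eq_mul_inv]
  exact (((isAlgebraic_algebraMap a).mul hα).add (isAlgebraic_algebraMap b)).mul
    (((isAlgebraic_algebraMap c).mul hα).add (isAlgebraic_algebraMap d)).inv

lemma adjoin_simple_mobius_eq (hdet : a * d - b * c ≠ 0)
    (hα : algebraMap K L c * α + algebraMap K L d ≠ 0) :
    K⟮(algebraMap K L a * α + algebraMap K L b) / (algebraMap K L c * α + algebraMap K L d)⟯ =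
      K⟮α⟯ := by
  set β := (algebraMap K L a * α + algebraMap K L b) / (algebraMap K L c * α + algebraMap K L d)
  have hdetL : algebraMap K L a * algebraMap K L d - algebraMap K L b * algebraMap K L c ≠ 0 := by
    simpa only [map_sub, map_mul] using (map_ne_zero (algebraMap K L)).2 hdet
  have hβα : β * (algebraMap K L c * α + algebraMap K L d) =
      algebraMap K L a * α + algebraMap K L b := div_mul_cancel₀ _ hα
  have hne : algebraMap K L (-c) * β + algebraMap K L a ≠ 0 := by
    intro hzero
    rw [map_neg] at hzero
    apply hdetL
    linear_combination (algebraMap K L c * α + algebraMap K L d) * hzero + algebraMap K L c * hβα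
  have hinv : α = (algebraMap K L d * β + algebraMap K L (-b)) /
      (algebraMap K L (-c) * β + algebraMap K L a) := by
    rw [eq_div_iff hne, map_neg, map_neg]
    linear_combination -hβα
  refine le_antisymm ?_ ?_ <;> rw [IntermediateField.adjoin_simple_le_iff]
  · exact mobius_mem_intermediateField _ (IntermediateField.mem_adjoin_simple_self K α)
  · nth_rw 1 [hinv]
    exact mobius_mem_intermediateField _ (IntermediateField.mem_adjoin_simple_self K β)

lemma natDegree_minpoly_mobius (hdet : a * d - b * c ≠ 0)
    (hα : algebraMap K L c * α + algebraMap K L d ≠ 0) (halg : IsAlgebraic K α) :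
    (minpoly K ((algebraMap K L a * α + algebraMap K L b) /
      (algebraMap K L c * α + algebraMap K L d))).natDegree = (minpoly K α).natDegree := by
  rw [← IntermediateField.adjoin.finrank (isAlgebraic_mobius halg).isIntegral,
    adjoin_simple_mobius_eq hdet hα, IntermediateField.adjoin.finrank halg.isIntegral]

end MobiusAdjoin

section HeightInequality

variable {a b c d u v x y : ℤ} {α : ℂ} {B : ℝ}

lemma natDegree_minpoly_mobius_intCast (hdet : a * d - b * c ≠ 0) (hα : IsAlgebraic ℚ α)
    (hpole : c * α + d ≠ 0) :
    (minpoly ℚ ((a * α + b) / (c * α + d))).natDegree = (minpoly ℚ α).natDegree := by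
  have hdetℚ : (a * d - b * c : ℚ) ≠ 0 := by exact_mod_cast hdet
  simpa using natDegree_minpoly_mobius (α := α) hdetℚ (by simpa using hpole) hα

lemma exists_mobiusTransform_intMinpoly_eq_C_mul (hdet : a * d - b * c ≠ 0)
    (hα : IsAlgebraic ℚ α) (hpole : c * α + d ≠ 0) :
    ∃ k, mobiusTransform a b c d (intMinpoly α) = C k * intMinpoly ((a * α + b) / (c * α + d)) := by
  refine intMinpoly.exists_eq_C_mul ?_ ?_ ?_
  · simpa using isAlgebraic_mobius (a := (a : ℚ)) (b := b) (c := c) (d := d) hα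
  · rw [mobiusTransform.aeval_eq_pow_mul_aeval (x := α), intMinpoly.aeval_eq_zero hα, mul_zero]
    simp only [algebraMap_int_eq, eq_intCast]
    linear_combination div_mul_cancel₀ (a * α + b) hpole
  · rw [natDegree_minpoly_mobius_intCast hdet hα hpole, ← intMinpoly.natDegree_eq hα]
    exact mobiusTransform.natDegree_le a b c d _

lemma pow_le_mahlerMeasure_mul_mahlerMeasure_mobius (hdet : a * d - b * c ≠ 0)
    (hα : IsAlgebraic ℚ α) (hpole : c * α + d ≠ 0) (hx : α ≠ x) (hy : α ≠ y)
    (hu : d * u - b = (a - c * u) * x) (hv : d * v - b = (a - c * v) * y)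
    (huv : IsCoprime (a - c * u) (a - c * v)) (hB : 0 ≤ B)
    (h : ∀ z : ℂ, B * (‖x - z‖ * ‖y - z‖) ≤ max ‖z‖ 1 * max ‖a * z + b‖ ‖c * z + d‖) :
    B ^ (minpoly ℚ α).natDegree ≤
      mahlerMeasure (intMinpoly α) * mahlerMeasure (intMinpoly ((a * α + b) / (c * α + d))) := by
  obtain ⟨k, hk⟩ := exists_mobiusTransform_intMinpoly_eq_C_mul hdet hα hpole
  set N := (intMinpoly α).eval x * (intMinpoly α).eval y
  have hN : N ≠ 0 := mul_ne_zero (intMinpoly.eval_ne_zero hα hx) (intMinpoly.eval_ne_zero hα hy)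
  have hkN : k ∣ N := mobiusTransform.dvd_eval_mul_eval (hk ▸ dvd_mul_right _ _) hu hv huv
  have hkabs : |(k : ℝ)| ≤ |(N : ℝ)| := by
    exact_mod_cast Int.le_of_dvd (abs_pos.2 hN) ((abs_dvd_abs _ _).2 hkN)
  have hkpos : 0 < |(k : ℝ)| :=
    abs_pos.2 (Int.cast_ne_zero.2 (ne_zero_of_dvd_ne_zero hN hkN))
  refine le_of_mul_le_mul_right ?_ hkpos
  calc B ^ (minpoly ℚ α).natDegree * |(k : ℝ)|
      ≤ B ^ (intMinpoly α).natDegree * |(N : ℝ)| := by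
        rw [intMinpoly.natDegree_eq hα]
        gcongr
    _ ≤ mahlerMeasure (intMinpoly α) * mahlerMeasure (mobiusTransform a b c d (intMinpoly α)) :=
        pow_natDegree_mul_abs_eval_le_mahlerMeasure_mul hB h _
    _ = mahlerMeasure (intMinpoly α) *
          mahlerMeasure (intMinpoly ((a * α + b) / (c * α + d))) * |(k : ℝ)| := by
        rw [hk, mahlerMeasure_C_mul]
        ring

theorem log_le_height_add_height_mobius (hdet : a * d - b * c ≠ 0)
    (hα : IsAlgebraic ℚ α) (hpole : c * α + d ≠ 0) (hx : α ≠ x) (hy : α ≠ y)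
    (hu : d * u - b = (a - c * u) * x) (hv : d * v - b = (a - c * v) * y)
    (huv : IsCoprime (a - c * u) (a - c * v)) (hB : 0 < B)
    (h : ∀ z : ℂ, B * (‖x - z‖ * ‖y - z‖) ≤ max ‖z‖ 1 * max ‖a * z + b‖ ‖c * z + d‖) :
    Real.log B ≤ height α + height ((a * α + b) / (c * α + d)) := by
  have hn : (0 : ℝ) < (minpoly ℚ α).natDegree :=
    Nat.cast_pos.2 (minpoly.natDegree_pos hα.isIntegral)
  have hpos (γ : ℂ) : mahlerMeasure (intMinpoly γ) ≠ 0 :=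
    (one_pos.trans_le (one_le_mahlerMeasure (intMinpoly.isPrimitive γ).ne_zero)).ne'
  have hlog := Real.log_le_log (pow_pos hB _)
    (pow_le_mahlerMeasure_mul_mahlerMeasure_mobius hdet hα hpole hx hy hu hv huv hB.le h)
  rw [Real.log_pow, Real.log_mul (hpos _) (hpos _)] at hlog
  rw [height, height, natDegree_minpoly_mobius_intCast hdet hα hpole, ← add_div,
    le_div_iff₀ hn, mul_comm]
  exact hlog

end HeightInequality

section Involution

variable {p q : ℤ} {α : ℂ}

lemma log_max_le_height_add_height_of_pole (hpq : IsCoprime p q) (hq : q ≠ 0)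
    (hα : p * α - q = 0) :
    Real.log (max (|(p - q : ℝ)| / 2) |(q : ℝ)|) ≤
      height α + height ((q * α + q) / (p * α - q)) := by
  have hp : p ≠ 0 := by
    rintro rfl
    exact hq (by simpa using hα)
  have hαeq : α = q / p := by
    rw [eq_div_iff (Int.cast_ne_zero.2 hp)]
    linear_combination hα
  have hmax : max (|(p - q : ℝ)| / 2) |(q : ℝ)| ≤ max |(q : ℝ)| |(p : ℝ)| := by
    have htriangle := abs_sub (p : ℝ) q
    refine max_le ?_ (le_max_left _ _)
    linarith [le_max_left |(q : ℝ)| |(p : ℝ)|, le_max_right |(q : ℝ)| |(p : ℝ)|]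
  have hpos : 0 < max (|(p - q : ℝ)| / 2) |(q : ℝ)| :=
    lt_max_of_lt_right (abs_pos.2 (Int.cast_ne_zero.2 hq))
  rw [hα, div_zero, height_zero, add_zero, hαeq, height_intCast_div_intCast hpq.symm]
  exact Real.log_le_log hpos hmax

lemma log_max_le_height_add_height (hpq : IsCoprime p q) (hq : q ≠ 0) (hp : p ≠ -q)
    (halg : IsAlgebraic ℚ α) (h0 : α ≠ 0) (h1 : α ≠ -1) :
    Real.log (max (|(p - q : ℝ)| / 2) |(q : ℝ)|) ≤
      height α + height ((q * α + q) / (p * α - q)) := by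
  rcases eq_or_ne (p * α - q) 0 with hpole | hpole
  · exact log_max_le_height_add_height_of_pole hpq hq hpole
  have hdet : q * -q - q * p ≠ 0 := by
    rw [show q * -q - q * p = -(q * (p + q)) by ring]
    exact neg_ne_zero.2 (mul_ne_zero hq (by lia))
  have hmain := log_le_height_add_height_mobius (a := q) (b := q) (c := p) (d := -q) (x := 0)
    (y := -1) (u := -1) (v := 0) (B := max (|(p - q : ℝ)| / 2) |(q : ℝ)|) hdet halg
    (by simpa [sub_eq_add_neg] using hpole) (by simpa using h0) (by simpa using h1) (by ring)
    (by ring) ?_ (lt_max_of_lt_right (abs_pos.2 (Int.cast_ne_zero.2 hq))) fun z ↦ ?_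
  · simpa [sub_eq_add_neg] using hmain
  · simpa [add_comm] using hpq.add_mul_right_left 1
  · have hz : ‖-1 - z‖ = ‖z + 1‖ := by rw [← neg_add', norm_neg, add_comm]
    simpa [hz, ← sub_eq_add_neg] using max_half_abs_sub_mul_norm_mul_norm_add_one_le p q z

lemma height_one_add_height_eq (hpq : IsCoprime p q) (hdvd : 2 ∣ p - q) :
    height 1 + height ((q * 1 + q) / (p * 1 - q)) =
      Real.log (max (|(p - q : ℝ)| / 2) |(q : ℝ)|) := by
  obtain ⟨m, hm⟩ := hdvd
  have hσ : ((q * 1 + q) / (p * 1 - q) : ℂ) = q / m := by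
    have hmℂ : (p - q : ℂ) = 2 * m := by exact_mod_cast hm
    rw [mul_one, mul_one, hmℂ, ← two_mul, mul_div_mul_left _ _ two_ne_zero]
  have habs : |(p - q : ℝ)| / 2 = |(m : ℝ)| := by
    have hmℝ : (p - q : ℝ) = 2 * m := by exact_mod_cast hm
    rw [hmℝ, abs_mul, abs_two, mul_div_cancel_left₀ _ two_ne_zero]
  have hqm : IsCoprime q m := by
    have hsub : IsCoprime q (2 * m) := by
      simpa [← hm, sub_eq_add_neg] using hpq.symm.add_mul_left_right (-1)
    exact hsub.of_mul_right_right
  rw [hσ, height_one, zero_add, height_intCast_div_intCast hqm, habs, max_comm]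

end Involution

/-- Row 2 of Table 1: for `σ(z) = (qz + q)/(pz - q)` (an involution) with `p, q` coprime,
`q > 0`, `p ≠ -q`: for every algebraic `α ∉ {0, -1}` one has
`h(α) + h(σ(α)) ≥ log max(|p - q|/2, q)`, with equality at `α = 1` when `p - q` is even. -/
theorem table1_row2 (p q : ℤ) (hpq : IsCoprime p q) (hq : 0 < q) (hp : p ≠ -q) :
    (∀ α : ℂ, IsAlgebraic ℚ α → α ≠ 0 → α ≠ -1 →
      height α + height (((q : ℂ) * α + (q : ℂ)) / ((p : ℂ) * α - (q : ℂ)))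
        ≥ Real.log (max ((|p - q| : ℝ) / 2) (q : ℝ))) ∧
    (2 ∣ p - q →
      height (1 : ℂ) + height (((q : ℂ) * 1 + (q : ℂ)) / ((p : ℂ) * 1 - (q : ℂ)))
        = Real.log (max ((|p - q| : ℝ) / 2) (q : ℝ))) := by
  have habs : |(q : ℝ)| = q := abs_of_pos (Int.cast_pos.2 hq)
  constructor
  · intro α halg h0 h1
    simpa only [habs] using log_max_le_height_add_height hpq hq.ne' hp halg h0 h1
  · intro hdvd
    simpa only [habs] using height_one_add_height_eq hpq hdvd
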